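/- Let a_1, …, a_n ∈ ℝ^d, let 1 ≤ k ≤ n, let μ > 0, and let B denote the closed unit ball of ℝ^d. Let 𝒰 be the set of k×n matrices U = (u_{i,j}) with entries u_{i,j} ∈ {0,1} and column sums Σ_{i=1}^k u_{i,j} = 1 for each j. Define F_μ(U, V) := Σ_{i=1}^k Σ_{j=1}^n u_{i,j}² [ (1/(2μ))‖a_j − v_i‖² − (μ/2)(dist((a_j − v_i)/μ, B))² ] for U ∈ 𝒰 and V = (v_1, …, v_k) ∈ (ℝ^d)^k. If (Ū, V̄) minimizes F_μ over 𝒰 × (ℝ^d)^k and every cluster of Ū is nonempty (i.e., Σ_{j=1}^n ū_{i,j} > 0 for each i = 1, …, k), then ‖v̄_i‖ ≤ r := √(Σ_{j=1}^n ‖a_j‖²) for every i = 1, …, k. -/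

import Mathlib

/-!
Each bracket in `Fmu` is the Huber function of `‖a j - V i‖` (`Fmu_eq_huber`), and the Huber
function is strictly increasing on `[0, ∞)` (`huber_strictMonoOn`). All demand points lie in the
ball of radius `r = √(Σ_j ‖a j‖²)` around the origin. If a center of the minimizer were outside that
ball, its radial projection onto the ball would be strictly closer to every demand point
(`norm_sub_radial_lt`); since the cluster of that center is nonempty, moving the center there would
strictly decrease the objective.
-/

open scoped BigOperators

/-- The Nesterov-smoothed multifacility location objective
`F_μ(U, V) = Σ_i Σ_j u_{i,j}² [ (1/(2μ))‖a_j - v_i‖² - (μ/2) dist((a_j - v_i)/μ, B)² ]`. -/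
noncomputable def Fmu {d n k : ℕ} (a : Fin n → EuclideanSpace ℝ (Fin d)) (μ : ℝ)
    (U : Fin k → Fin n → ℝ) (V : Fin k → EuclideanSpace ℝ (Fin d)) : ℝ :=
  ∑ i, ∑ j, (U i j) ^ 2 *
    ((1 / (2 * μ)) * ‖a j - V i‖ ^ 2 -
      (μ / 2) * (Metric.infDist (μ⁻¹ • (a j - V i))
        (Metric.closedBall (0 : EuclideanSpace ℝ (Fin d)) 1)) ^ 2)

/-- `U` is a binary assignment matrix: entries in `{0, 1}` with each column summing
to `1`. -/
def IsAssignment {k n : ℕ} (U : Fin k → Fin n → ℝ) : Prop :=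
  (∀ i j, U i j = 0 ∨ U i j = 1) ∧ ∀ j, ∑ i, U i j = 1

/-- The distance to the closed unit ball; outside the ball it is attained at the radial projection `z / ‖z‖`. -/
theorem infDist_unitBall {E : Type*} [NormedAddCommGroup E] [NormedSpace ℝ E] (z : E) :
    Metric.infDist z (Metric.closedBall (0 : E) 1) = max (‖z‖ - 1) 0 := by
  apply le_antisymm
  · rcases le_total ‖z‖ 1 with h | h
    · rw [Metric.infDist_zero_of_mem (by simpa using h)]
      exact le_max_right _ _
    · have hz : 0 < ‖z‖ := by linarith
      have hmem : ‖z‖⁻¹ • z ∈ Metric.closedBall (0 : E) 1 := by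
        simp [norm_smul, hz.ne']
      refine (Metric.infDist_le_dist_of_mem hmem).trans (le_trans (le_of_eq ?_) (le_max_left _ _))
      have h1 : z - ‖z‖⁻¹ • z = (1 - ‖z‖⁻¹) • z := by rw [sub_smul, one_smul]
      rw [dist_eq_norm, h1, norm_smul, Real.norm_of_nonneg (sub_nonneg.2 (inv_le_one_of_one_le₀ h))]
      field_simp
  · refine max_le ?_ Metric.infDist_nonneg
    refine (Metric.le_infDist ⟨0, by simp⟩).2 fun w hw => ?_
    have hw' : ‖w‖ ≤ 1 := by simpa using hw
    rw [dist_eq_norm]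
    linarith [norm_sub_norm_le z w]

/-- The Huber function: quadratic on `[0, μ]`, and equal to `t - μ / 2` beyond `μ`. -/
noncomputable def huber (μ t : ℝ) : ℝ :=
  (1 / (2 * μ)) * t ^ 2 - (μ / 2) * (max (t / μ - 1) 0) ^ 2

theorem huber_of_le {μ t : ℝ} (hμ : 0 < μ) (h : t ≤ μ) : huber μ t = t ^ 2 / (2 * μ) := by
  have : t / μ - 1 ≤ 0 := by rw [sub_nonpos, div_le_one hμ]; exact h
  rw [huber, max_eq_right this]
  ring

theorem huber_of_ge {μ t : ℝ} (hμ : 0 < μ) (h : μ ≤ t) : huber μ t = t - μ / 2 := by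
  have : 0 ≤ t / μ - 1 := by rw [sub_nonneg, one_le_div hμ]; exact h
  rw [huber, max_eq_left this]
  field_simp
  ring

theorem huber_strictMonoOn {μ : ℝ} (hμ : 0 < μ) : StrictMonoOn (huber μ) (Set.Ici 0) := by
  have hA : StrictMonoOn (huber μ) (Set.Icc 0 μ) := by
    intro s hs t ht hst
    rw [huber_of_le hμ hs.2, huber_of_le hμ ht.2]
    have := hs.1
    gcongr
  have hB : StrictMonoOn (huber μ) (Set.Ici μ) := by
    intro s hs t ht hst
    rw [huber_of_ge hμ hs, huber_of_ge hμ ht]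
    linarith
  rw [← Set.Icc_union_Ici_eq_Ici hμ.le]
  exact hA.union hB (isGreatest_Icc hμ.le) isLeast_Ici

theorem Fmu_eq_huber {d n k : ℕ} (a : Fin n → EuclideanSpace ℝ (Fin d)) {μ : ℝ} (hμ : 0 < μ)
    (U : Fin k → Fin n → ℝ) (V : Fin k → EuclideanSpace ℝ (Fin d)) :
    Fmu a μ U V = ∑ i, ∑ j, (U i j) ^ 2 * huber μ ‖a j - V i‖ := by
  simp only [Fmu, huber, infDist_unitBall, norm_smul, norm_inv, Real.norm_of_nonneg hμ.le,
    div_eq_inv_mul]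

/-- Projecting a point outside the ball of radius `R` radially onto that ball brings it strictly
closer to every point of the ball. -/
theorem norm_sub_radial_lt {E : Type*} [NormedAddCommGroup E] [InnerProductSpace ℝ E]
    {R : ℝ} {x v : E} (hx : ‖x‖ ≤ R) (hv : R < ‖v‖) : ‖x - (R / ‖v‖) • v‖ < ‖x - v‖ := by
  have hR : 0 ≤ R := (norm_nonneg x).trans hx
  have hv0 : 0 < ‖v‖ := hR.trans_lt hv
  set c := R / ‖v‖ with hc
  have hcv : c * ‖v‖ = R := by rw [hc]; field_simp
  have hc1 : c < 1 := by rw [hc, div_lt_one hv0]; exact hv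
  have hin : inner ℝ x v ≤ R * ‖v‖ :=
    (real_inner_le_norm x v).trans (by gcongr)
  refine lt_of_pow_lt_pow_left₀ 2 (norm_nonneg _) ?_
  rw [norm_sub_sq_real, norm_sub_sq_real, inner_smul_right, norm_smul,
    Real.norm_of_nonneg (div_nonneg hR hv0.le), hcv]
  -- The gap is `(1 - c) ((1 + c) ‖v‖² - 2 ⟪x, v⟫) ≥ (1 - c) ‖v‖ (‖v‖ - R)`.
  have h1 : (1 - c) * inner ℝ x v ≤ (1 - c) * (R * ‖v‖) :=
    mul_le_mul_of_nonneg_left hin (by linarith)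
  have h2 : (1 - c) * (R * ‖v‖) = R * ‖v‖ - R ^ 2 := by rw [← hcv]; ring
  nlinarith [sq_pos_of_pos (sub_pos.2 hv)]

/-- If `(Ū, V̄)` minimizes `F_μ` over `𝒰 × (ℝ^d)^k` and every cluster of
`Ū` is nonempty, then `‖v̄_i‖ ≤ r := √(Σ_j ‖a_j‖²)` for every `i`. -/
theorem statement10 {d n k : ℕ} (hn : 1 ≤ n) (hk : 1 ≤ k) (hkn : k ≤ n)
    (a : Fin n → EuclideanSpace ℝ (Fin d)) (μ : ℝ) (hμ : 0 < μ)
    (Ubar : Fin k → Fin n → ℝ) (Vbar : Fin k → EuclideanSpace ℝ (Fin d))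
    (hUbar : IsAssignment Ubar)
    (hmin : ∀ (U : Fin k → Fin n → ℝ) (V : Fin k → EuclideanSpace ℝ (Fin d)),
      IsAssignment U → Fmu a μ Ubar Vbar ≤ Fmu a μ U V)
    (hcluster : ∀ i, 0 < ∑ j, Ubar i j) :
    ∀ i, ‖Vbar i‖ ≤ Real.sqrt (∑ j, ‖a j‖ ^ 2) := by
  intro i
  by_contra! hi
  set R := Real.sqrt (∑ j, ‖a j‖ ^ 2) with hR
  have ha : ∀ j, ‖a j‖ ≤ R := fun j =>
    Real.le_sqrt_of_sq_le
      (Finset.single_le_sum (f := fun j => ‖a j‖ ^ 2) (fun _ _ => sq_nonneg _) (Finset.mem_univ j))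
  have hlt : ∀ j, huber μ ‖a j - (R / ‖Vbar i‖) • Vbar i‖ < huber μ ‖a j - Vbar i‖ := fun j =>
    huber_strictMonoOn hμ (norm_nonneg _) (norm_nonneg _) (norm_sub_radial_lt (ha j) hi)
  obtain ⟨j₀, -, hj₀⟩ : ∃ j ∈ Finset.univ, 0 < Ubar i j := by
    by_contra! h
    exact absurd (hcluster i) (not_lt.2 (Finset.sum_nonpos h))
  refine absurd (hmin Ubar (Function.update Vbar i ((R / ‖Vbar i‖) • Vbar i)) hUbar) (not_le.2 ?_)
  rw [Fmu_eq_huber a hμ, Fmu_eq_huber a hμ]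
  refine Finset.sum_lt_sum (fun l _ => ?_) ⟨i, Finset.mem_univ _, ?_⟩
  · rcases eq_or_ne l i with rfl | hl
    · simp only [Function.update_self]
      exact Finset.sum_le_sum fun j _ => mul_le_mul_of_nonneg_left (hlt j).le (sq_nonneg _)
    · simp [Function.update_of_ne hl]
  · simp only [Function.update_self]
    exact Finset.sum_lt_sum
      (fun j _ => mul_le_mul_of_nonneg_left (hlt j).le (sq_nonneg _))
      ⟨j₀, Finset.mem_univ _, mul_lt_mul_of_pos_left (hlt j₀) (pow_pos hj₀ 2)⟩
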